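/- If β > 1/3, then there exists a constant C = C(β) > 0 such that for all real numbers a, b, c, Σ_{n ∈ ℤ} ⟨n³ + an² + bn + c⟩^{−β} ≤ C; in particular the bound is uniform in a, b, and c. -/

import Mathlib

/-- The Japanese bracket `⟨x⟩ = (1 + x²)^{1/2}`. -/
noncomputable def jb (x : ℝ) : ℝ := Real.sqrt (1 + x^2)

theorem cubic_factor (a b c : ℝ) : ∃ z₁ z₂ z₃ : ℂ, ∀ x : ℂ,
    x^3 + a * x^2 + b * x + c = (x - z₁) * (x - z₂) * (x - z₃) := by
  obtain ⟨z, hz⟩ : ∃ z : ℂ, z^3 + a * z^2 + b * z + c = 0 := by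
    let P : Polynomial ℂ := Polynomial.C 1 * Polynomial.X ^ 3 + Polynomial.C (a : ℂ) * Polynomial.X ^ 2
      + Polynomial.C (b : ℂ) * Polynomial.X + Polynomial.C (c : ℂ)
    have hd : P.degree = 3 := Polynomial.degree_cubic one_ne_zero
    obtain ⟨z, hz⟩ := IsAlgClosed.exists_root P (by rw [hd]; decide)
    refine ⟨z, ?_⟩
    simpa [P, Polynomial.IsRoot] using hz
  obtain ⟨s, hs⟩ := IsAlgClosed.exists_pow_nat_eq
    ((a + z)^2 - 4 * (b + z * (a + z))) (n := 2) (by norm_num)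
  refine ⟨z, (-(a + z) + s) / 2, (-(a + z) - s) / 2, fun x => ?_⟩
  linear_combination hz + (x - z) / 4 * hs

theorem one_le_jb (x : ℝ) : 1 ≤ jb x := by
  unfold jb
  rw [Real.one_le_sqrt]
  nlinarith [sq_nonneg x]

theorem abs_le_jb (x : ℝ) : |x| ≤ jb x := by
  unfold jb
  apply Real.abs_le_sqrt
  linarith

/-- the majorant -/
noncomputable def maj (β : ℝ) (m : ℤ) : ℝ := ((1 + |(m : ℝ)|) / 3) ^ (-(3 * β))

theorem maj_nonneg (β : ℝ) (m : ℤ) : 0 ≤ maj β m := by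
  unfold maj; positivity

theorem maj_summable (β : ℝ) (hβ : 1/3 < β) : Summable (maj β) := by
  have h1 : Summable (fun n : ℤ => |(n : ℝ)| ^ (-(3 * β))) :=
    Real.summable_abs_int_rpow (by linarith)
  have h2 : Summable (fun n : ℤ => if n = 0 then (1 : ℝ) else 0) :=
    (hasSum_ite_eq (0 : ℤ) (1 : ℝ)).summable
  have h3 : Summable (fun n : ℤ => (1 + |(n : ℝ)|) ^ (-(3 * β))) := by
    refine Summable.of_nonneg_of_le (fun n => by positivity) (fun n => ?_) (h1.add h2)
    by_cases hn : n = 0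
    · subst hn
      have : (0 : ℝ) ≤ |((0 : ℤ) : ℝ)| ^ (-(3 * β)) := by positivity
      simp only [if_true]
      have h4 : (1 + |((0 : ℤ) : ℝ)|) ^ (-(3 * β)) = 1 := by simp
      linarith
    · simp only [hn, if_false, add_zero]
      apply Real.rpow_le_rpow_of_nonpos
      · have : (n : ℝ) ≠ 0 := by exact_mod_cast hn
        positivity
      · linarith
      · linarith
  refine (h3.div_const ((3 : ℝ) ^ (-(3 * β)))).congr (fun n => ?_)
  unfold maj
  rw [Real.div_rpow (by positivity) (by positivity)]

theorem term_le (β : ℝ) (hβ : 1/3 < β) (y r : ℝ) (n : ℤ) (h : |(n : ℝ) - r| ^ 3 ≤ |y|) :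
    jb y ^ (-β) ≤ maj β (n - ⌊r⌋) := by
  have h1 := one_le_jb y
  have h2 := abs_le_jb y
  have hm : ((1 + |((n - ⌊r⌋ : ℤ) : ℝ)|) / 3) ^ 3 ≤ jb y := by
    have hf0 := Int.floor_le r
    have hf1 := Int.lt_floor_add_one r
    have h3 : |((n - ⌊r⌋ : ℤ) : ℝ)| ≤ |(n : ℝ) - r| + 1 := by
      push_cast
      rw [abs_le]
      have := neg_abs_le ((n : ℝ) - r)
      have := le_abs_self ((n : ℝ) - r)
      constructor <;> linarith
    have h0 : 0 ≤ |((n - ⌊r⌋ : ℤ) : ℝ)| := abs_nonneg _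
    rcases le_total (|(n : ℝ) - r|) 1 with h4 | h4
    · refine le_trans (pow_le_one₀ (by positivity) ?_) h1
      linarith
    · refine le_trans (pow_le_pow_left₀ (by positivity) ?_ 3) (h.trans h2)
      linarith
  have e : maj β (n - ⌊r⌋) = (((1 + |((n - ⌊r⌋ : ℤ) : ℝ)|) / 3) ^ 3) ^ (-β) := by
    unfold maj
    rw [← Real.rpow_natCast, ← Real.rpow_mul (by positivity)]
    congr 1
    push_cast
    ring
  rw [e]
  exact Real.rpow_le_rpow_of_nonpos (by positivity) hm (by linarith)

theorem cube_le_one_of (x y z p : ℝ) (hx : 0 ≤ x) (hy : 0 ≤ y) (hz : 0 ≤ z)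
    (h : x * y * z ≤ p) : x ^ 3 ≤ p ∨ y ^ 3 ≤ p ∨ z ^ 3 ≤ p := by
  have key : ∀ u : ℝ, 0 ≤ u → u ≤ x → u ≤ y → u ≤ z → u ^ 3 ≤ p := by
    intro u hu h1 h2 h3
    refine le_trans ?_ h
    calc u ^ 3 = u * u * u := by ring
      _ ≤ x * y * z := by gcongr
  rcases le_total x y with h1 | h1 <;> rcases le_total y z with h2 | h2 <;>
    rcases le_total x z with h3 | h3
  · exact Or.inl (key x hx le_rfl h1 h3)
  · exact Or.inl (key x hx le_rfl h1 (h1.trans h2))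
  · exact Or.inl (key x hx le_rfl h1 h3)
  · exact Or.inr (Or.inr (key z hz h3 h2 le_rfl))
  · exact Or.inr (Or.inl (key y hy h1 le_rfl h2))
  · exact Or.inr (Or.inl (key y hy h1 le_rfl h2))
  · exact Or.inr (Or.inr (key z hz (h2.trans h1) h2 le_rfl))
  · exact Or.inr (Or.inr (key z hz h3 h2 le_rfl))

/-- If `β > 1/3`, there is a constant `C = C(β) > 0` such that for all real `a, b, c`,
`Σ_{n ∈ ℤ} ⟨n³ + an² + bn + c⟩^{−β} ≤ C`, uniformly in `a`, `b`, `c`. -/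
theorem sum_bracket_cubic (β : ℝ) (hβ : 1/3 < β) :
    ∃ C > 0, ∀ a b c : ℝ,
      Summable (fun n : ℤ => jb ((n : ℝ)^3 + a * (n : ℝ)^2 + b * (n : ℝ) + c) ^ (-β)) ∧
      (∑' n : ℤ, jb ((n : ℝ)^3 + a * (n : ℝ)^2 + b * (n : ℝ) + c) ^ (-β)) ≤ C := by
  have hS := maj_summable β hβ
  have hS0 : 0 ≤ ∑' m, maj β m := tsum_nonneg (maj_nonneg β)
  refine ⟨3 * (∑' m, maj β m) + 1, by linarith, fun a b c => ?_⟩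
  obtain ⟨z₁, z₂, z₃, hz⟩ := cubic_factor a b c
  have hs : ∀ k : ℤ, HasSum (fun n : ℤ => maj β (n - k)) (∑' m, maj β m) := fun k =>
    (Equiv.subRight k).hasSum_iff.mpr hS.hasSum
  have hT := ((hs ⌊z₁.re⌋).add (hs ⌊z₂.re⌋)).add (hs ⌊z₃.re⌋)
  have hre : ∀ (n : ℤ) (z : ℂ), |(n : ℝ) - z.re| ≤ ‖(n : ℂ) - z‖ := fun n z => by
    simpa using Complex.abs_re_le_norm ((n : ℂ) - z)
  have hle : ∀ n : ℤ, jb ((n : ℝ)^3 + a * (n : ℝ)^2 + b * (n : ℝ) + c) ^ (-β) ≤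
      maj β (n - ⌊z₁.re⌋) + maj β (n - ⌊z₂.re⌋) + maj β (n - ⌊z₃.re⌋) := by
    intro n
    have hp : |(n : ℝ) - z₁.re| * |(n : ℝ) - z₂.re| * |(n : ℝ) - z₃.re| ≤
        |(n : ℝ)^3 + a * (n : ℝ)^2 + b * (n : ℝ) + c| := by
      have e : |(n : ℝ)^3 + a * (n : ℝ)^2 + b * (n : ℝ) + c| =
          ‖(n : ℂ) - z₁‖ * ‖(n : ℂ) - z₂‖ * ‖(n : ℂ) - z₃‖ := by
        rw [← norm_mul, ← norm_mul, ← hz, ← Real.norm_eq_abs, ← Complex.norm_real]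
        push_cast
        rfl
      rw [e]
      gcongr <;> apply hre
    have p1 := maj_nonneg β (n - ⌊z₁.re⌋)
    have p2 := maj_nonneg β (n - ⌊z₂.re⌋)
    have p3 := maj_nonneg β (n - ⌊z₃.re⌋)
    rcases cube_le_one_of _ _ _ _ (abs_nonneg _) (abs_nonneg _) (abs_nonneg _) hp with h | h | h
    all_goals
      have := term_le β hβ _ _ n h
      linarith
  have hsum : Summable (fun n : ℤ => jb ((n : ℝ)^3 + a * (n : ℝ)^2 + b * (n : ℝ) + c) ^ (-β)) :=
    Summable.of_nonneg_of_le
      (fun n => Real.rpow_nonneg (zero_le_one.trans (one_le_jb _)) _) hle hT.summable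
  refine ⟨hsum, ?_⟩
  have := hasSum_le hle hsum.hasSum hT
  linarith
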